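/- Let k ≥ 1 and let A be any function from finite multisets of vectors in ℝ^k to ℝ^k (a permutation-invariant aggregation operator, since functions on multisets are automatically independent of input order). Then there exist functions f and g, each mapping finite multisets of vectors in ℝ^k to ℝ^k, such that for every finite multiset S of finite multisets B_1, …, B_m of vectors in ℝ^k, A applied to the disjoint union (multiset join) of the B_i equals g applied to the multiset {f(B_1), …, f(B_m)}. -/

import Mathlib

/-!
An infinite type is in bijection with the finite multisets over it, so the local aggregation `f` can
encode each block as a single vector without loss. The global aggregation `g` decodes the blocks and
applies `A` to their join.
-/

theorem abc_aggregate_decomposition_general {α β : Type*} [Infinite α] (A : Multiset α → β) :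
    ∃ (f : Multiset α → α) (g : Multiset α → β),
      ∀ S : Multiset (Multiset α), A S.join = g (S.map f) := by
  obtain ⟨encode⟩ : Nonempty (Multiset α ≃ α) :=
    Cardinal.eq.1 (Cardinal.mk_multiset_of_infinite α)
  have decode_encode (S : Multiset (Multiset α)) : (S.map encode).map encode.symm = S := by
    rw [Multiset.map_map, encode.symm_comp_self, Multiset.map_id]
  exact ⟨encode, fun codes ↦ A (codes.map encode.symm).join, fun S ↦ by simp only [decode_encode]⟩

/-- **Theorem 1 (ABC decomposition).** For `k ≥ 1`, any permutation-invariant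
AGGREGATE operator `A` on finite multisets of vectors in `ℝ^k` (modeled as a
function on `Multiset (Fin k → ℝ)`, which is automatically order-independent)
decomposes into a local aggregation `f` and a global aggregation `g`: applying
`A` to the disjoint union (multiset join) of any finite family of multisets
`B₁, …, Bₘ` equals `g` applied to the multiset `{f(B₁), …, f(Bₘ)}`. -/
theorem abc_aggregate_decomposition (k : ℕ) (hk : 1 ≤ k)
    (A : Multiset (Fin k → ℝ) → (Fin k → ℝ)) :
    ∃ f g : Multiset (Fin k → ℝ) → (Fin k → ℝ),
      ∀ S : Multiset (Multiset (Fin k → ℝ)),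
        A S.join = g (S.map f) := by
  have : Nonempty (Fin k) := ⟨⟨0, hk⟩⟩
  exact abc_aggregate_decomposition_general A
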